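/- arXiv:2203.13942 — 2 statements merged into one kernel-verified Lean document; each statement's English description precedes it below -/
import Mathlib

section
/- Let f : ℝ → ℝ be of bounded variation on ℝ (finite total variation over ℝ), and let f(∞) = lim_{x→∞} f(x) and f(−∞) = lim_{x→−∞} f(x) (these limits exist). Define g(x) = f(x) − f(∞)H(x) − f(−∞)H(−x), where H is the Heaviside step function. Then g is of bounded variation on ℝ with lim_{|x|→∞} g(x) = 0, the improper integral ĝ(s) = lim_{X→−∞, Y→∞} ∫_X^Y e^{-ist} g(t) dt exists for each s ≠ 0, and for each x ∈ ℝ, (f(x−)+f(x+))/2 = (1/(2π)) · lim_{T→∞, S→0⁺} ∫_{S<|s|<T} e^{ixs} ĝ(s) ds + f(∞)H(x) + f(−∞)H(−x), where the double limit means: for every ε > 0 there exist M > 0 and η > 0 such that the stated quantity is within ε whenever T > M and 0 < S < η. -/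
/-- The Heaviside step function: `1` for positive argument, `1/2` at `0`, `0` otherwise. -/
noncomputable def heaviside (x : ℝ) : ℝ :=
  if 0 < x then 1 else if x = 0 then 1/2 else 0

/-!
Subtracting a step from `f` leaves a function `g` of bounded variation that vanishes at `±∞`, so
`dg = μ - ν` for finite measures `μ`, `ν` of equal mass, with `g(t-) = μ(-∞, t) - ν(-∞, t)` and
`-g(t+) = μ(t, ∞) - ν(t, ∞)`. By Fubini the truncated Fourier integrals of `g` converge to
`ĝ(s) = (φ_μ(-s) - φ_ν(-s)) / (is)`, where `φ` denotes characteristic functions; the boundary terms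
cancel because the masses agree. For each of the two measures, pairing `s` with `-s` and applying
Fubini again turns the integral of `e^{ixs} φ_μ(-s) / (is)` over `S < |s| < T` into the `μ`-integral
of `2 (Si(T(x - u)) - Si(S(x - u)))`, which converges boundedly to `π sign(x - u)` by Dirichlet's
integral. This is the inversion formula of Gil-Pelaez; the difference of the two limits is
`π (g(x-) + g(x+))`.
-/

open MeasureTheory Filter Set Topology

/-! ### The sine integral -/

/-- The sine integral `Si A = ∫₀ᴬ sin t / t dt`, the integrand being continued by `1` at `0`. -/
noncomputable def sineIntegral (A : ℝ) : ℝ := ∫ t in (0 : ℝ)..A, Real.sinc t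

lemma integral_exp_neg_mul_Ioi {s : ℝ} (hs : 0 < s) :
    ∫ y in Ioi (0 : ℝ), Real.exp (-s * y) = s⁻¹ := by
  rw [integral_exp_mul_Ioi (neg_lt_zero.2 hs)]
  simp

lemma integral_exp_neg_mul_mul_sin (A y : ℝ) :
    ∫ s in (0 : ℝ)..A, Real.exp (-s * y) * Real.sin s =
      (1 + y ^ 2)⁻¹ - Real.exp (-A * y) * (Real.cos A + y * Real.sin A) * (1 + y ^ 2)⁻¹ := by
  have hy : (1 + y ^ 2) ≠ 0 := by positivity
  have hderiv (s : ℝ) : HasDerivAt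
      (fun s => -(Real.exp (-s * y) * (Real.cos s + y * Real.sin s) * (1 + y ^ 2)⁻¹))
      (Real.exp (-s * y) * Real.sin s) s := by
    have hexp : HasDerivAt (fun s : ℝ => Real.exp (-s * y)) (Real.exp (-s * y) * (-1 * y)) s :=
      (((hasDerivAt_id s).neg).mul_const y).exp
    have htrig : HasDerivAt (fun s : ℝ => Real.cos s + y * Real.sin s)
        (-Real.sin s + y * Real.cos s) s :=
      (Real.hasDerivAt_cos s).add ((Real.hasDerivAt_sin s).const_mul y)
    refine ((hexp.mul htrig).mul_const (1 + y ^ 2)⁻¹).neg.congr_deriv ?_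
    field_simp
    ring
  rw [intervalIntegral.integral_eq_sub_of_hasDerivAt (fun s _ => hderiv s)
    ((by fun_prop : Continuous fun s : ℝ => Real.exp (-s * y) * Real.sin s).intervalIntegrable _ _)]
  simp
  ring

lemma integrable_exp_neg_mul_mul_sin_prod (A : ℝ) :
    Integrable (Function.uncurry fun s y : ℝ => Real.exp (-s * y) * Real.sin s)
      ((volume.restrict (Ioc 0 A)).prod (volume.restrict (Ioi 0))) := by
  have hmeas : AEStronglyMeasurable
      (Function.uncurry fun s y : ℝ => Real.exp (-s * y) * Real.sin s)
      ((volume.restrict (Ioc 0 A)).prod (volume.restrict (Ioi 0))) := by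
    unfold Function.uncurry
    exact Continuous.aestronglyMeasurable (by fun_prop)
  refine (integrable_prod_iff hmeas).2 ⟨?_, ?_⟩
  · refine (ae_restrict_iff' measurableSet_Ioc).2 (ae_of_all _ fun s hs => ?_)
    exact (integrableOn_exp_mul_Ioi (neg_lt_zero.2 hs.1) 0).mul_const (Real.sin s)
  · have hnorm : ∀ s ∈ Ioc 0 A, |Real.sinc s| =
        ∫ y in Ioi (0 : ℝ), ‖Real.exp (-s * y) * Real.sin s‖ := by
      intro s hs
      simp only [norm_mul, Real.norm_eq_abs, Real.abs_exp]
      rw [integral_mul_const, integral_exp_neg_mul_Ioi hs.1, Real.sinc_of_ne_zero hs.1.ne',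
        abs_div, abs_of_pos hs.1, div_eq_inv_mul]
    refine IntegrableOn.congr_fun ?_ hnorm measurableSet_Ioc
    exact (Real.continuous_sinc.abs.integrableOn_Icc (a := 0) (b := A)).mono_set
      Ioc_subset_Icc_self

lemma abs_cos_add_mul_sin_mul_inv_le (A y : ℝ) :
    |(Real.cos A + y * Real.sin A) * (1 + y ^ 2)⁻¹| ≤ 1 := by
  have hy : 0 < 1 + y ^ 2 := by positivity
  rw [abs_mul, abs_of_pos (inv_pos.2 hy), ← div_eq_mul_inv, div_le_one hy]
  refine abs_le_of_sq_le_sq ?_ hy.le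
  nlinarith [Real.sin_sq_add_cos_sq A, sq_nonneg (y * Real.cos A - Real.sin A), sq_nonneg y,
    sq_nonneg (y ^ 2)]

lemma sineIntegral_eq_integral_integral {A : ℝ} (hA : 0 ≤ A) :
    sineIntegral A = ∫ y in Ioi (0 : ℝ), ∫ s in (0 : ℝ)..A, Real.exp (-s * y) * Real.sin s := by
  simp_rw [sineIntegral, intervalIntegral.integral_of_le hA]
  rw [← integral_integral_swap (integrable_exp_neg_mul_mul_sin_prod A)]
  refine setIntegral_congr_fun measurableSet_Ioc fun s hs => ?_
  rw [integral_mul_const, integral_exp_neg_mul_Ioi hs.1, Real.sinc_of_ne_zero hs.1.ne',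
    div_eq_inv_mul]

lemma abs_sineIntegral_sub_pi_div_two_le {A : ℝ} (hA : 0 < A) :
    |sineIntegral A - Real.pi / 2| ≤ A⁻¹ := by
  set r : ℝ → ℝ := fun y =>
    Real.exp (-A * y) * (Real.cos A + y * Real.sin A) * (1 + y ^ 2)⁻¹
  have hexp : IntegrableOn (fun y : ℝ => Real.exp (-A * y)) (Ioi 0) :=
    integrableOn_exp_mul_Ioi (neg_lt_zero.2 hA) 0
  have hbound (y : ℝ) : ‖r y‖ ≤ Real.exp (-A * y) := by
    simp only [r]
    rw [mul_assoc, norm_mul, Real.norm_eq_abs, Real.norm_eq_abs, Real.abs_exp]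
    exact mul_le_of_le_one_right (Real.exp_pos _).le (abs_cos_add_mul_sin_mul_inv_le A y)
  have hint : IntegrableOn r (Ioi 0) :=
    Integrable.mono' hexp (Measurable.aestronglyMeasurable (by fun_prop)) (ae_of_all _ hbound)
  have hSi : sineIntegral A = Real.pi / 2 - ∫ y in Ioi (0 : ℝ), r y := by
    simp_rw [sineIntegral_eq_integral_integral hA.le, integral_exp_neg_mul_mul_sin]
    rw [integral_sub integrable_inv_one_add_sq.integrableOn hint, integral_Ioi_inv_one_add_sq]
    simp
  calc |sineIntegral A - Real.pi / 2| = ‖∫ y in Ioi (0 : ℝ), r y‖ := by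
        rw [hSi, sub_sub_cancel_left, abs_neg, Real.norm_eq_abs]
    _ ≤ ∫ y in Ioi (0 : ℝ), Real.exp (-A * y) :=
        norm_integral_le_of_norm_le hexp (ae_of_all _ hbound)
    _ = A⁻¹ := integral_exp_neg_mul_Ioi hA

lemma sineIntegral_zero : sineIntegral 0 = 0 := intervalIntegral.integral_same

lemma sineIntegral_neg (A : ℝ) : sineIntegral (-A) = -sineIntegral A := by
  have h := intervalIntegral.integral_comp_neg (a := 0) (b := A) Real.sinc
  simp only [Real.sinc_neg, neg_zero] at h
  rw [sineIntegral, sineIntegral, h, intervalIntegral.integral_symm]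

lemma continuous_sineIntegral : Continuous sineIntegral :=
  intervalIntegral.continuous_primitive (fun _ _ => Real.continuous_sinc.intervalIntegrable _ _) 0

lemma abs_sineIntegral_le (A : ℝ) : |sineIntegral A| ≤ Real.pi / 2 + 1 := by
  wlog hA : 0 ≤ A generalizing A
  · simpa [sineIntegral_neg] using this (-A) (by linarith)
  rcases le_total A 1 with h | h
  · have hle := intervalIntegral.norm_integral_le_of_norm_le_const (a := 0) (b := A) (C := 1)
      (f := Real.sinc) fun x _ => Real.abs_sinc_le_one x
    rw [sub_zero, one_mul, abs_of_nonneg hA] at hle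
    exact hle.trans (by linarith [Real.pi_pos])
  · have hdist := abs_le.1 (abs_sineIntegral_sub_pi_div_two_le (by linarith : 0 < A))
    have hinv : A⁻¹ ≤ 1 := inv_le_one_of_one_le₀ h
    rw [abs_le]
    constructor <;> linarith [Real.pi_pos, hdist.1, hdist.2]

lemma tendsto_sineIntegral_atTop : Tendsto sineIntegral atTop (𝓝 (Real.pi / 2)) := by
  rw [tendsto_iff_norm_sub_tendsto_zero]
  refine squeeze_zero' (Eventually.of_forall fun _ => norm_nonneg _) ?_ tendsto_inv_atTop_zero
  filter_upwards [eventually_gt_atTop 0] with A hA using abs_sineIntegral_sub_pi_div_two_le hA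

lemma tendsto_sineIntegral_mul_atTop (a : ℝ) :
    Tendsto (fun T => sineIntegral (T * a)) atTop (𝓝 (Real.pi / 2 * SignType.sign a)) := by
  rcases lt_trichotomy a 0 with ha | rfl | ha
  · have := (tendsto_sineIntegral_atTop.comp (tendsto_id.atTop_mul_const (neg_pos.2 ha))).neg
    simpa [ha, Function.comp_def, sineIntegral_neg] using this
  · simp [sineIntegral_zero]
  · have := tendsto_sineIntegral_atTop.comp (tendsto_id.atTop_mul_const ha)
    simpa [ha, Function.comp_def] using this

lemma tendsto_sineIntegral_mul_sub (a : ℝ) :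
    Tendsto (fun P : ℝ × ℝ => sineIntegral (P.1 * a) - sineIntegral (P.2 * a))
      (atTop ×ˢ 𝓝[>] 0) (𝓝 (Real.pi / 2 * SignType.sign a)) := by
  have hzero : Tendsto (fun S => sineIntegral (S * a)) (𝓝[>] 0) (𝓝 0) :=
    ((continuous_sineIntegral.comp (continuous_mul_const a)).tendsto' 0 0
      (by simp [sineIntegral_zero])).mono_left nhdsWithin_le_nhds
  simpa using ((tendsto_sineIntegral_mul_atTop a).comp tendsto_fst).sub (hzero.comp tendsto_snd)

lemma integral_sin_mul_div {S T : ℝ} (hS : 0 < S) (hT : 0 < T) (a : ℝ) :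
    ∫ s in S..T, Real.sin (s * a) / s = sineIntegral (T * a) - sineIntegral (S * a) := by
  have hsinc : ∀ s ∈ uIcc S T, Real.sin (s * a) / s = a * Real.sinc (s * a) := by
    intro s hs
    have hs0 : s ≠ 0 := ((lt_min hS hT).trans_le hs.1).ne'
    rcases eq_or_ne a 0 with rfl | ha
    · simp
    · rw [Real.sinc_of_ne_zero (mul_ne_zero hs0 ha)]
      field_simp
  rw [intervalIntegral.integral_congr hsinc, intervalIntegral.integral_const_mul,
    intervalIntegral.mul_integral_comp_mul_right, sineIntegral, sineIntegral,
    intervalIntegral.integral_interval_sub_left] <;>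
  exact Real.continuous_sinc.intervalIntegrable _ _

/-! ### Principal values -/

/-- The integral of `F` over `ℝ` converges to `L` in the principal value sense at both `0` and
`∞`: `∫_{S<|s|<T} F(s) ds → L` as `T → ∞` and `S → 0⁺` independently. -/
def HasPrincipalValueIntegral {E : Type*} [NormedAddCommGroup E] [NormedSpace ℝ E]
    (F : ℝ → E) (L : E) : Prop :=
  Tendsto (fun P : ℝ × ℝ => (∫ s in (-P.1)..(-P.2), F s) + ∫ s in P.2..P.1, F s)
    (atTop ×ˢ 𝓝[>] 0) (𝓝 L)

section PrincipalValue

variable {E : Type*} [NormedAddCommGroup E] {F G : ℝ → E} {L M : E}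

lemma intervalIntegrable_of_continuousOn_compl_zero (hF : ContinuousOn F {0}ᶜ) {a b : ℝ}
    (hab : 0 < a * b) : IntervalIntegrable F volume a b := by
  refine (hF.mono fun s hs h => ?_).intervalIntegrable
  rw [mem_singleton_iff] at h
  subst h
  rcases mem_uIcc.1 hs with h | h <;> nlinarith [h.1, h.2]

lemma eventually_pos_atTop_prod_nhdsGT_zero :
    ∀ᶠ P : ℝ × ℝ in atTop ×ˢ 𝓝[>] 0, 0 < P.1 ∧ 0 < P.2 :=
  (eventually_gt_atTop 0).prod_mk self_mem_nhdsWithin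

variable [NormedSpace ℝ E]

lemma HasPrincipalValueIntegral.sub (hF : HasPrincipalValueIntegral F L)
    (hG : HasPrincipalValueIntegral G M) (hFc : ContinuousOn F {0}ᶜ)
    (hGc : ContinuousOn G {0}ᶜ) : HasPrincipalValueIntegral (fun s => F s - G s) (L - M) := by
  refine (Tendsto.sub hF hG).congr' ?_
  filter_upwards [eventually_pos_atTop_prod_nhdsGT_zero] with P ⟨hT, hS⟩
  have hneg : 0 < -P.1 * -P.2 := by rw [neg_mul_neg]; positivity
  have hpos : 0 < P.2 * P.1 := by positivity
  rw [intervalIntegral.integral_sub (intervalIntegrable_of_continuousOn_compl_zero hFc hneg)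
      (intervalIntegrable_of_continuousOn_compl_zero hGc hneg),
    intervalIntegral.integral_sub (intervalIntegrable_of_continuousOn_compl_zero hFc hpos)
      (intervalIntegrable_of_continuousOn_compl_zero hGc hpos)]
  abel

lemma hasPrincipalValueIntegral_iff (hF : ContinuousOn F {0}ᶜ) :
    HasPrincipalValueIntegral F L ↔ Tendsto (fun P : ℝ × ℝ => ∫ s in P.2..P.1, (F s + F (-s)))
      (atTop ×ˢ 𝓝[>] 0) (𝓝 L) := by
  refine tendsto_congr' ?_
  filter_upwards [eventually_pos_atTop_prod_nhdsGT_zero] with P ⟨hT, hS⟩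
  have hneg : ContinuousOn (fun s => F (-s)) {0}ᶜ :=
    hF.comp continuous_neg.continuousOn fun s hs => neg_ne_zero.2 hs
  have hpos : 0 < P.2 * P.1 := by positivity
  rw [intervalIntegral.integral_add (intervalIntegrable_of_continuousOn_compl_zero hF hpos)
    (intervalIntegrable_of_continuousOn_compl_zero hneg hpos),
    intervalIntegral.integral_comp_neg, add_comm]

end PrincipalValue

/-! ### Gil-Pelaez inversion -/

section GilPelaez

variable (μ : Measure ℝ)

lemma charFun_map_const_sub (x s : ℝ) :
    charFun (μ.map (x - ·)) s = Complex.exp (Complex.I * x * s) * charFun μ (-s) := by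
  rw [charFun_apply_real, charFun_apply_real, ← integral_const_mul,
    integral_map (by fun_prop) (Continuous.aestronglyMeasurable (by fun_prop))]
  congr 1 with u
  rw [← Complex.exp_add]
  push_cast
  ring_nf

variable [IsFiniteMeasure μ]

lemma continuousOn_charFun_div_I_mul :
    ContinuousOn (fun s : ℝ => charFun μ s / (Complex.I * s)) {0}ᶜ :=
  continuous_charFun.continuousOn.div (by fun_prop) fun s hs => by simpa using hs

lemma charFun_div_I_mul_add_neg (s : ℝ) :
    charFun μ s / (Complex.I * s) + charFun μ (-s) / (Complex.I * (-s : ℝ)) =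
      ((∫ u, 2 * (Real.sin (s * u) / s) ∂μ : ℝ) : ℂ) := by
  rcases eq_or_ne s 0 with rfl | hs
  · simp
  have hs' : (s : ℂ) ≠ 0 := by exact_mod_cast hs
  have hint (r : ℝ) : Integrable (fun u : ℝ => Complex.exp (r * u * Complex.I)) μ :=
    Integrable.of_bound (C := 1) (Continuous.aestronglyMeasurable (by fun_prop))
      (ae_of_all _ fun u => by rw [← Complex.ofReal_mul, Complex.norm_exp_ofReal_mul_I])
  rw [charFun_apply_real, charFun_apply_real, ← integral_div, ← integral_div,
    ← integral_add ((hint s).div_const _) ((hint (-s)).div_const _), ← integral_complex_ofReal]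
  congr 1 with u
  push_cast
  rw [Complex.sin]
  field_simp
  rw [Complex.I_sq]
  ring_nf

lemma integral_charFun_div_I_mul_add_neg {S T : ℝ} (hS : 0 < S) (hT : 0 < T) :
    ∫ s in S..T, (charFun μ s / (Complex.I * s) + charFun μ (-s) / (Complex.I * (-s : ℝ))) =
      ((∫ u, 2 * (sineIntegral (T * u) - sineIntegral (S * u)) ∂μ : ℝ) : ℂ) := by
  have : IsFiniteMeasure (volume.restrict (uIoc S T)) :=
    inferInstanceAs (IsFiniteMeasure (volume.restrict (Ioc _ _)))
  have hprod : Integrable (Function.uncurry fun s u : ℝ => 2 * (Real.sin (s * u) / s))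
      ((volume.restrict (uIoc S T)).prod μ) := by
    have hmem : ∀ᵐ P ∂((volume.restrict (uIoc S T)).prod μ), P.1 ∈ uIoc S T :=
      Measure.quasiMeasurePreserving_fst.ae (ae_restrict_mem measurableSet_uIoc)
    refine Integrable.of_bound (C := 2 * (1 / min S T)) ?_ (hmem.mono fun P hP => ?_)
    · unfold Function.uncurry
      exact Measurable.aestronglyMeasurable (by fun_prop)
    · have hmin : 0 < min S T := lt_min hS hT
      rw [Function.uncurry, norm_mul, norm_div, Real.norm_two, Real.norm_eq_abs, Real.norm_eq_abs,
        abs_of_pos (hmin.trans hP.1)]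
      gcongr
      · exact Real.abs_sin_le_one _
      · exact hP.1.le
  simp_rw [charFun_div_I_mul_add_neg]
  rw [intervalIntegral.integral_ofReal, intervalIntegral_integral_swap hprod]
  simp_rw [intervalIntegral.integral_const_mul, integral_sin_mul_div hS hT]

lemma tendsto_integral_sineIntegral_mul_sub :
    Tendsto (fun P : ℝ × ℝ => ∫ u, 2 * (sineIntegral (P.1 * u) - sineIntegral (P.2 * u)) ∂μ)
      (atTop ×ˢ 𝓝[>] 0) (𝓝 (∫ u, Real.pi * SignType.sign u ∂μ)) := by
  refine tendsto_integral_filter_of_dominated_convergence (fun _ => 4 * (Real.pi / 2 + 1))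
    (Eventually.of_forall fun P => ?_) (Eventually.of_forall fun P => ae_of_all _ fun u => ?_)
    (integrable_const _) (ae_of_all _ fun u => ?_)
  · have := continuous_sineIntegral
    exact Continuous.aestronglyMeasurable (by fun_prop)
  · have hT := abs_le.1 (abs_sineIntegral_le (P.1 * u))
    have hS := abs_le.1 (abs_sineIntegral_le (P.2 * u))
    rw [Real.norm_eq_abs, abs_le]
    constructor <;> linarith [hT.1, hT.2, hS.1, hS.2]
  · convert (tendsto_sineIntegral_mul_sub u).const_mul 2 using 2
    ring

lemma integral_sign : ∫ u, (SignType.sign u : ℝ) ∂μ = μ.real (Ioi 0) - μ.real (Iio 0) := by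
  have hsign : (fun u : ℝ => (SignType.sign u : ℝ)) =
      fun u => (Ioi 0).indicator (fun _ => 1) u - (Iio 0).indicator (fun _ => 1) u := by
    ext u
    rcases lt_trichotomy u 0 with h | rfl | h
    · simp [h, h.le]
    · simp
    · simp [h, h.le]
  rw [hsign, integral_sub ((integrable_const (1 : ℝ)).indicator measurableSet_Ioi)
    ((integrable_const (1 : ℝ)).indicator measurableSet_Iio),
    integral_indicator_const _ measurableSet_Ioi, integral_indicator_const _ measurableSet_Iio]
  simp

lemma hasPrincipalValueIntegral_charFun_div :
    HasPrincipalValueIntegral (fun s : ℝ => charFun μ s / (Complex.I * s))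
      ((Real.pi * (μ.real (Ioi 0) - μ.real (Iio 0)) : ℝ) : ℂ) := by
  rw [hasPrincipalValueIntegral_iff (continuousOn_charFun_div_I_mul μ), ← integral_sign,
    ← integral_const_mul]
  refine ((Complex.continuous_ofReal.tendsto _).comp
    (tendsto_integral_sineIntegral_mul_sub μ)).congr' ?_
  filter_upwards [eventually_pos_atTop_prod_nhdsGT_zero] with P ⟨hT, hS⟩
  exact (integral_charFun_div_I_mul_add_neg μ hS hT).symm

lemma hasPrincipalValueIntegral_exp_mul_charFun_neg_div (x : ℝ) :
    HasPrincipalValueIntegral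
      (fun s : ℝ => Complex.exp (Complex.I * x * s) * (charFun μ (-s) / (Complex.I * s)))
      ((Real.pi * (μ.real (Iio x) - μ.real (Ioi x)) : ℝ) : ℂ) := by
  have h := hasPrincipalValueIntegral_charFun_div (μ.map (x - ·))
  simp_rw [charFun_map_const_sub, mul_div_assoc] at h
  rw [map_measureReal_apply (by fun_prop) measurableSet_Ioi,
    map_measureReal_apply (by fun_prop) measurableSet_Iio] at h
  simpa using h

lemma continuousOn_exp_mul_charFun_neg_div (x : ℝ) :
    ContinuousOn
      (fun s : ℝ => Complex.exp (Complex.I * x * s) * (charFun μ (-s) / (Complex.I * s))) {0}ᶜ := by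
  have hchar : Continuous fun s : ℝ => charFun μ (-s) := continuous_charFun.comp continuous_neg
  refine ContinuousOn.mul (by fun_prop) (hchar.continuousOn.div (by fun_prop) fun s hs => ?_)
  simpa using hs

end GilPelaez

/-! ### Fourier transforms of distribution functions -/

/-- The improper Fourier integral `ĝ(s) = ∫ e^{-ist} g(t) dt` converges to `z`, the two endpoints
tending to `-∞` and `∞` independently. -/
def HasImproperFourierTransform (g : ℝ → ℝ) (s : ℝ) (z : ℂ) : Prop :=
  Tendsto (fun P : ℝ × ℝ => ∫ t in P.1..P.2, Complex.exp (-(Complex.I * s * t)) * (g t : ℂ))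
    (atBot ×ˢ atTop) (𝓝 z)

lemma HasImproperFourierTransform.congr_ae {f g : ℝ → ℝ} {s : ℝ} {z : ℂ}
    (hf : HasImproperFourierTransform f s z) (hfg : f =ᵐ[volume] g) :
    HasImproperFourierTransform g s z := by
  refine Tendsto.congr (fun P => intervalIntegral.integral_congr_ae ?_) hf
  filter_upwards [hfg] with t ht _
  rw [ht]

section DistributionFunction

variable {E : Type*} [NormedAddCommGroup E] [NormedSpace ℝ E]
  (μ : Measure ℝ) [IsFiniteMeasure μ]

lemma monotone_measureReal_Iio : Monotone fun t : ℝ => μ.real (Iio t) :=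
  fun _ _ h => measureReal_mono (Iio_subset_Iio h)

lemma intervalIntegrable_measureReal_Iio_smul {e : ℝ → E} (he : Continuous e) (X Y : ℝ) :
    IntervalIntegrable (fun t => μ.real (Iio t) • e t) volume X Y :=
  (monotone_measureReal_Iio μ).intervalIntegrable.smul_continuousOn he.continuousOn

lemma integral_indicator_Ioi {X Y : ℝ} (hXY : X ≤ Y) (e : ℝ → E) (u : ℝ) :
    ∫ t in X..Y, (Ioi u).indicator e t = ∫ t in (min (max X u) Y)..Y, e t := by
  rw [intervalIntegral.integral_of_le hXY, setIntegral_indicator measurableSet_Ioi,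
    Ioc_inter_Ioi, intervalIntegral.integral_of_le (min_le_right _ _)]
  rcases le_total (max X u) Y with h | h
  · rw [min_eq_left h]
  · rw [min_eq_right h, Ioc_self, Ioc_eq_empty h.not_gt]

lemma integral_measureReal_Iio_smul [CompleteSpace E] {e : ℝ → E} {X Y : ℝ} (hXY : X ≤ Y)
    (he : IntervalIntegrable e volume X Y) :
    ∫ t in X..Y, μ.real (Iio t) • e t = ∫ u, (∫ t in (min (max X u) Y)..Y, e t) ∂μ := by
  have hlayer (t : ℝ) : μ.real (Iio t) • e t = ∫ u, (Ioi u).indicator e t ∂μ := by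
    rw [← integral_indicator_const (e t) measurableSet_Iio]
    rfl
  have hprod : Integrable (Function.uncurry fun t u : ℝ => (Ioi u).indicator e t)
      ((volume.restrict (uIoc X Y)).prod μ) := by
    have hset : MeasurableSet {P : ℝ × ℝ | P.2 < P.1} :=
      measurableSet_lt measurable_snd measurable_fst
    exact (he.def'.comp_fst μ).indicator hset
  simp_rw [hlayer]
  rw [intervalIntegral_integral_swap hprod]
  simp_rw [integral_indicator_Ioi hXY]

lemma tendsto_integral_comp_clamp {φ : ℝ → E} (hφ : Continuous φ) {C : ℝ}
    (hC : ∀ u, ‖φ u‖ ≤ C) :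
    Tendsto (fun P : ℝ × ℝ => ∫ u, φ (min (max P.1 u) P.2) ∂μ) (atBot ×ˢ atTop)
      (𝓝 (∫ u, φ u ∂μ)) := by
  refine tendsto_integral_filter_of_dominated_convergence (fun _ => C)
    (Eventually.of_forall fun P => Continuous.aestronglyMeasurable (by fun_prop))
    (Eventually.of_forall fun P => ae_of_all _ fun u => hC _) (integrable_const _)
    (ae_of_all _ fun u => tendsto_const_nhds.congr' ?_)
  filter_upwards [(eventually_le_atBot u).prod_mk (eventually_ge_atTop u)] with P hP
  rw [max_eq_right hP.1, min_eq_left hP.2]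

end DistributionFunction

section CharacteristicFunction

variable (μ ν : Measure ℝ)

lemma norm_exp_neg_I_mul (s t : ℝ) : ‖Complex.exp (-(Complex.I * s * t))‖ = 1 := by
  rw [show -(Complex.I * s * t) = ((-(s * t) : ℝ) : ℂ) * Complex.I by push_cast; ring,
    Complex.norm_exp_ofReal_mul_I]

lemma integral_exp_neg_I_mul {s : ℝ} (hs : s ≠ 0) (a b : ℝ) :
    ∫ t in a..b, Complex.exp (-(Complex.I * s * t)) =
      (Complex.exp (-(Complex.I * s * a)) - Complex.exp (-(Complex.I * s * b))) /
        (Complex.I * s) := by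
  have hc : -(Complex.I * s) ≠ 0 := by simp [hs]
  simp_rw [← neg_mul (Complex.I * (s : ℂ))]
  rw [integral_exp_mul_complex hc, div_neg, ← neg_div, neg_sub]

lemma charFun_neg_eq_integral (s : ℝ) :
    charFun μ (-s) = ∫ u, Complex.exp (-(Complex.I * s * u)) ∂μ := by
  rw [charFun_apply_real]
  congr 1 with u
  push_cast
  ring_nf

variable [IsFiniteMeasure μ] [IsFiniteMeasure ν]

lemma integral_exp_neg_I_mul_mul_measureReal_Iio {s : ℝ} (hs : s ≠ 0) {X Y : ℝ} (hXY : X ≤ Y) :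
    ∫ t in X..Y, Complex.exp (-(Complex.I * s * t)) * (μ.real (Iio t) : ℂ) =
      ((∫ u, Complex.exp (-(Complex.I * s * (min (max X u) Y : ℝ))) ∂μ) -
        μ.real univ * Complex.exp (-(Complex.I * s * Y))) / (Complex.I * s) := by
  have hexp : Continuous fun t : ℝ => Complex.exp (-(Complex.I * s * t)) := by fun_prop
  have hint : Integrable
      (fun u : ℝ => Complex.exp (-(Complex.I * s * (min (max X u) Y : ℝ)))) μ :=
    Integrable.of_bound (C := 1) (Continuous.aestronglyMeasurable (by fun_prop))
      (ae_of_all _ fun u => (norm_exp_neg_I_mul s _).le)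
  calc ∫ t in X..Y, Complex.exp (-(Complex.I * s * t)) * (μ.real (Iio t) : ℂ)
      = ∫ t in X..Y, μ.real (Iio t) • Complex.exp (-(Complex.I * s * t)) := by
        simp_rw [Complex.real_smul, mul_comm]
    _ = ∫ u, (∫ t in (min (max X u) Y)..Y, Complex.exp (-(Complex.I * s * t))) ∂μ :=
        integral_measureReal_Iio_smul μ hXY (hexp.intervalIntegrable X Y)
    _ = _ := by
        simp_rw [integral_exp_neg_I_mul hs]
        rw [integral_div, integral_sub hint (integrable_const _), integral_const,
          Complex.real_smul]

lemma hasImproperFourierTransform_measureReal_Iio_sub (hμν : μ.real univ = ν.real univ) {s : ℝ}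
    (hs : s ≠ 0) :
    HasImproperFourierTransform (fun t => μ.real (Iio t) - ν.real (Iio t)) s
      (charFun μ (-s) / (Complex.I * s) - charFun ν (-s) / (Complex.I * s)) := by
  have hexp : Continuous fun t : ℝ => Complex.exp (-(Complex.I * s * t)) := by fun_prop
  have hclamp := ((tendsto_integral_comp_clamp μ hexp fun u => (norm_exp_neg_I_mul s u).le).sub
    (tendsto_integral_comp_clamp ν hexp fun u => (norm_exp_neg_I_mul s u).le)).div_const
      (Complex.I * s)
  simp_rw [← charFun_neg_eq_integral, sub_div] at hclamp
  have hint (ρ : Measure ℝ) [IsFiniteMeasure ρ] (X Y : ℝ) : IntervalIntegrable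
      (fun t => Complex.exp (-(Complex.I * s * t)) * (ρ.real (Iio t) : ℂ)) volume X Y := by
    simpa only [Complex.real_smul, mul_comm] using
      intervalIntegrable_measureReal_Iio_smul ρ hexp X Y
  refine hclamp.congr' ?_
  filter_upwards [(eventually_le_atBot 0).prod_mk (eventually_ge_atTop 0)] with P hP
  simp_rw [Complex.ofReal_sub, mul_sub]
  rw [intervalIntegral.integral_sub (hint μ _ _) (hint ν _ _),
    integral_exp_neg_I_mul_mul_measureReal_Iio μ hs (hP.1.trans hP.2),
    integral_exp_neg_I_mul_mul_measureReal_Iio ν hs (hP.1.trans hP.2), hμν]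
  ring

end CharacteristicFunction

/-! ### Functions of bounded variation -/

section BoundedVariation

lemma boundedVariationOn_fun_sub {α E : Type*} [LinearOrder α] [SeminormedAddCommGroup E]
    {f g : α → E} {s : Set α} (hf : BoundedVariationOn f s) (hg : BoundedVariationOn g s) :
    BoundedVariationOn (fun x => f x - g x) s := by
  refine ne_top_of_le_ne_top (ENNReal.add_ne_top.2 ⟨hf, hg⟩) (iSup_le ?_)
  rintro ⟨n, u, hu, us⟩
  calc ∑ i ∈ Finset.range n, edist (f (u (i + 1)) - g (u (i + 1))) (f (u i) - g (u i))
      ≤ ∑ i ∈ Finset.range n,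
          (edist (f (u (i + 1))) (f (u i)) + edist (g (u (i + 1))) (g (u i))) := by
        gcongr with i
        rw [edist_eq_enorm_sub, edist_eq_enorm_sub, edist_eq_enorm_sub, sub_sub_sub_comm]
        exact enorm_sub_le
    _ ≤ eVariationOn f s + eVariationOn g s := by
        rw [Finset.sum_add_distrib]
        exact add_le_add (eVariationOn.sum_le hu us) (eVariationOn.sum_le hu us)

lemma exists_isFiniteMeasure_sub_of_boundedVariationOn {α : Type*}
    [LinearOrder α] [DenselyOrdered α] [TopologicalSpace α] [OrderTopology α]
    [SecondCountableTopology α] [CompactIccSpace α] [MeasurableSpace α] [BorelSpace α]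
    {f : α → ℝ} (hf : BoundedVariationOn f univ) :
    ∃ μ ν : Measure α, IsFiniteMeasure μ ∧ IsFiniteMeasure ν ∧
      μ.real univ - ν.real univ = limUnder atTop f - limUnder atBot f ∧
      (∀ x, μ.real (Iio x) - ν.real (Iio x) = Function.leftLim f x - limUnder atBot f) ∧
      ∀ x, μ.real (Ioi x) - ν.real (Ioi x) = limUnder atTop f - Function.rightLim f x := by
  set j := SignedMeasure.toJordanDecomposition hf.vectorMeasure
  have happly {A : Set α} (hA : MeasurableSet A) :
      j.posPart.real A - j.negPart.real A = hf.vectorMeasure A := by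
    rw [← Measure.toSignedMeasure_sub_apply hA]
    exact congrArg (· A) (SignedMeasure.toSignedMeasure_toJordanDecomposition hf.vectorMeasure)
  exact ⟨j.posPart, j.negPart, inferInstance, inferInstance,
    (happly .univ).trans hf.vectorMeasure_univ,
    fun x => (happly measurableSet_Iio).trans (hf.vectorMeasure_Iio x),
    fun x => (happly measurableSet_Ioi).trans (hf.vectorMeasure_Ioi x)⟩

lemma ae_leftLim_eq_of_boundedVariationOn {f : ℝ → ℝ} (hf : BoundedVariationOn f univ) :
    ∀ᵐ t, Function.leftLim f t = f t := by
  filter_upwards [hf.locallyBoundedVariationOn.ae_differentiableAt] with t ht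
  exact ht.continuousAt.continuousWithinAt.leftLim_eq

lemma exists_hasImproperFourierTransform_of_boundedVariationOn {g : ℝ → ℝ}
    (hg : BoundedVariationOn g univ)
    (htop : Tendsto g atTop (𝓝 0)) (hbot : Tendsto g atBot (𝓝 0)) :
    ∃ G : ℝ → ℂ, (∀ s ≠ 0, HasImproperFourierTransform g s (G s)) ∧
      ∀ x : ℝ, HasPrincipalValueIntegral (fun s : ℝ => Complex.exp (Complex.I * x * s) * G s)
        ((Real.pi * (Function.leftLim g x + Function.rightLim g x) : ℝ) : ℂ) := by
  obtain ⟨μ, ν, _, _, hmass, hIio, hIoi⟩ := exists_isFiniteMeasure_sub_of_boundedVariationOn hg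
  simp only [htop.limUnder_eq, hbot.limUnder_eq, sub_zero, zero_sub, sub_eq_zero]
    at hmass hIio hIoi
  refine ⟨fun s => charFun μ (-s) / (Complex.I * s) - charFun ν (-s) / (Complex.I * s),
    fun s hs => ?_, fun x => ?_⟩
  · refine (hasImproperFourierTransform_measureReal_Iio_sub μ ν hmass hs).congr_ae ?_
    simpa only [hIio] using! ae_leftLim_eq_of_boundedVariationOn hg
  · have hPV := (hasPrincipalValueIntegral_exp_mul_charFun_neg_div μ x).sub
      (hasPrincipalValueIntegral_exp_mul_charFun_neg_div ν x)
      (continuousOn_exp_mul_charFun_neg_div μ x) (continuousOn_exp_mul_charFun_neg_div ν x)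
    simp_rw [← mul_sub] at hPV
    convert hPV using 1
    rw [← Complex.ofReal_sub]
    congr 1
    linear_combination Real.pi * (hIoi x - hIio x)

end BoundedVariation

/-! ### Heaviside corrections -/

section Heaviside

lemma heaviside_of_pos {x : ℝ} (hx : 0 < x) : heaviside x = 1 := if_pos hx

lemma heaviside_of_neg {x : ℝ} (hx : x < 0) : heaviside x = 0 := by
  simp [heaviside, hx.not_gt, hx.ne]

lemma heaviside_zero : heaviside 0 = 1 / 2 := by simp [heaviside]

lemma heaviside_neg (x : ℝ) : heaviside (-x) = 1 - heaviside x := by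
  rcases lt_trichotomy x 0 with h | rfl | h
  · rw [heaviside_of_pos (neg_pos.2 h), heaviside_of_neg h, sub_zero]
  · rw [neg_zero, heaviside_zero]
    norm_num
  · rw [heaviside_of_neg (neg_neg_iff_pos.2 h), heaviside_of_pos h, sub_self]

lemma monotone_heaviside : Monotone heaviside := by
  intro x y hxy
  unfold heaviside
  split_ifs <;> grind

lemma abs_heaviside_le_one (x : ℝ) : |heaviside x| ≤ 1 := by
  unfold heaviside
  split_ifs <;> norm_num [abs_le]

lemma boundedVariationOn_heaviside : BoundedVariationOn heaviside univ :=
  (monotone_heaviside.monotoneOn univ).boundedVariationOn fun x _ => abs_heaviside_le_one x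

lemma leftLim_heaviside_add_rightLim_heaviside (x : ℝ) :
    Function.leftLim heaviside x + Function.rightLim heaviside x = 2 * heaviside x := by
  rcases eq_or_ne x 0 with rfl | hx
  · have hleft : Tendsto heaviside (𝓝[<] 0) (𝓝 0) :=
      tendsto_const_nhds.congr' (eventually_nhdsWithin_of_forall fun t ht =>
        (heaviside_of_neg ht).symm)
    have hright : Tendsto heaviside (𝓝[>] 0) (𝓝 1) :=
      tendsto_const_nhds.congr' (eventually_nhdsWithin_of_forall fun t ht =>
        (heaviside_of_pos ht).symm)
    rw [leftLim_eq_of_tendsto hleft, rightLim_eq_of_tendsto hright, heaviside_zero]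
    norm_num
  · have hcont : ContinuousAt heaviside x := by
      rcases hx.lt_or_gt with h | h
      · exact continuousAt_const.congr ((eventually_lt_nhds h).mono fun t ht =>
          (heaviside_of_neg ht).symm)
      · exact continuousAt_const.congr ((eventually_gt_nhds h).mono fun t ht =>
          (heaviside_of_pos ht).symm)
    rw [hcont.continuousWithinAt.leftLim_eq, hcont.continuousWithinAt.rightLim_eq, two_mul]

/-- The function `f - a H - b H(-·)`, which removes from `f` the step having its limits `a` at `∞`
and `b` at `-∞`. -/
noncomputable def subHeaviside (f : ℝ → ℝ) (a b t : ℝ) : ℝ :=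
  f t - a * heaviside t - b * heaviside (-t)

variable {f : ℝ → ℝ} {a b : ℝ}

lemma subHeaviside_eq (f : ℝ → ℝ) (a b t : ℝ) :
    subHeaviside f a b t = f t - (b + (a - b) * heaviside t) := by
  rw [subHeaviside, heaviside_neg]
  ring

lemma boundedVariationOn_subHeaviside (hf : BoundedVariationOn f univ) (a b : ℝ) :
    BoundedVariationOn (subHeaviside f a b) univ := by
  have hstep : BoundedVariationOn (fun t => b + (a - b) * heaviside t) univ :=
    ((LipschitzWith.const b).add (lipschitzWith_smul (a - b))).comp_boundedVariationOn
      boundedVariationOn_heaviside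
  simpa only [← subHeaviside_eq] using boundedVariationOn_fun_sub hf hstep

lemma tendsto_subHeaviside_atTop (ha : Tendsto f atTop (𝓝 a)) (b : ℝ) :
    Tendsto (subHeaviside f a b) atTop (𝓝 0) := by
  rw [← sub_self a]
  refine (ha.sub_const a).congr' ?_
  filter_upwards [eventually_gt_atTop 0] with t ht
  simp [subHeaviside_eq, heaviside_of_pos ht]

lemma tendsto_subHeaviside_atBot (hb : Tendsto f atBot (𝓝 b)) (a : ℝ) :
    Tendsto (subHeaviside f a b) atBot (𝓝 0) := by
  rw [← sub_self b]
  refine (hb.sub_const b).congr' ?_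
  filter_upwards [eventually_lt_atBot 0] with t ht
  simp [subHeaviside_eq, heaviside_of_neg ht]

lemma leftLim_subHeaviside_add_rightLim {x l r : ℝ} (hl : Tendsto f (𝓝[<] x) (𝓝 l))
    (hr : Tendsto f (𝓝[>] x) (𝓝 r)) (a b : ℝ) :
    Function.leftLim (subHeaviside f a b) x + Function.rightLim (subHeaviside f a b) x =
      2 * ((l + r) / 2 - a * heaviside x - b * heaviside (-x)) := by
  have hleft := hl.sub (((monotone_heaviside.tendsto_leftLim x).const_mul (a - b)).const_add b)
  have hright := hr.sub (((monotone_heaviside.tendsto_rightLim x).const_mul (a - b)).const_add b)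
  simp only [← subHeaviside_eq] at hleft hright
  rw [leftLim_eq_of_tendsto hleft, rightLim_eq_of_tendsto hright, heaviside_neg]
  linear_combination (b - a) * leftLim_heaviside_add_rightLim_heaviside x

end Heaviside

/-- Inversion for a bounded variation function with nonzero limits at `±∞`:
with `g(x) = f(x) - f(∞)H(x) - f(-∞)H(-x)`, the function `g` is of bounded variation
with limit `0` at `±∞`, its improper-integral Fourier transform `ĝ(s)` exists for
`s ≠ 0`, and `(f(x-)+f(x+))/2 = (1/(2π)) lim_{T→∞,S→0⁺} ∫_{S<|s|<T} e^{ixs} ĝ(s) ds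
+ f(∞)H(x) + f(-∞)H(-x)`. -/
theorem fourier_inversion_BV_with_limits (f : ℝ → ℝ)
    (hbv : BoundedVariationOn f Set.univ)
    (finf fninf : ℝ)
    (htop : Filter.Tendsto f Filter.atTop (nhds finf))
    (hbot : Filter.Tendsto f Filter.atBot (nhds fninf)) :
    BoundedVariationOn
      (fun t : ℝ => f t - finf * heaviside t - fninf * heaviside (-t)) Set.univ ∧
    Filter.Tendsto
      (fun t : ℝ => f t - finf * heaviside t - fninf * heaviside (-t))
      Filter.atTop (nhds 0) ∧
    Filter.Tendsto
      (fun t : ℝ => f t - finf * heaviside t - fninf * heaviside (-t))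
      Filter.atBot (nhds 0) ∧
    ∃ G : ℝ → ℂ,
      (∀ s : ℝ, s ≠ 0 → Filter.Tendsto
        (fun P : ℝ × ℝ =>
          ∫ t in P.1..P.2, Complex.exp (-(Complex.I * s * t)) *
            ((f t - finf * heaviside t - fninf * heaviside (-t) : ℝ) : ℂ))
        (Filter.atBot ×ˢ Filter.atTop) (nhds (G s))) ∧
      ∀ x fl fr : ℝ,
        Filter.Tendsto f (nhdsWithin x (Set.Iio x)) (nhds fl) →
        Filter.Tendsto f (nhdsWithin x (Set.Ioi x)) (nhds fr) →
        Filter.Tendsto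
          (fun P : ℝ × ℝ => (1 / (2 * (Real.pi : ℂ))) *
            ((∫ s in (-P.1)..(-P.2), Complex.exp (Complex.I * x * s) * G s) +
              ∫ s in P.2..P.1, Complex.exp (Complex.I * x * s) * G s))
          (Filter.atTop ×ˢ nhdsWithin 0 (Set.Ioi 0))
          (nhds (((fl + fr) / 2 - finf * heaviside x - fninf * heaviside (-x) : ℝ) : ℂ)) := by
  obtain ⟨G, hG, hPV⟩ := exists_hasImproperFourierTransform_of_boundedVariationOn
    (boundedVariationOn_subHeaviside hbv finf fninf) (tendsto_subHeaviside_atTop htop fninf)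
    (tendsto_subHeaviside_atBot hbot finf)
  refine ⟨boundedVariationOn_subHeaviside hbv finf fninf, tendsto_subHeaviside_atTop htop fninf,
    tendsto_subHeaviside_atBot hbot finf, G, hG, fun x fl fr hl hr => ?_⟩
  have hpi : (Real.pi : ℂ) ≠ 0 := by exact_mod_cast Real.pi_ne_zero
  have hlim := (hPV x).const_mul (1 / (2 * (Real.pi : ℂ)))
  rw [leftLim_subHeaviside_add_rightLim hl hr, Complex.ofReal_mul, Complex.ofReal_mul] at hlim
  convert hlim using 2
  rw [Complex.ofReal_ofNat]
  field_simp
end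

section
/- Let g(x) = arctan(x) − (π/2)·sgn(x). Then for each real s ≠ 0 the improper integral ĝ(s) = lim_{X→−∞, Y→∞} ∫_X^Y e^{-ist} g(t) dt exists and equals iπ(1 − e^{−|s|})/s. -/
/-! On each side of its jump `g` is a translate of `arctan` and vanishes at the infinite end.
Integrating by parts against the primitive `(i/s) e^{-ist}` of `e^{-ist}` therefore leaves only the
contribution `iπ/s` of the jump and the absolutely convergent integral
`-(i/s) ∫ e^{-ist} / (1 + t²) dt`, which Fourier inversion reads off from the elementary transform
of `e^{-2π|t|}`. -/

open Complex Filter FourierTransform MeasureTheory Set Topology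
open scoped Interval Real

section ExpAbs

variable {a b : ℂ}

lemma eqOn_Iic_cexp_mul_sub_mul_abs (a b : ℂ) :
    EqOn (fun t : ℝ ↦ cexp (b * t - a * |t|)) (fun t : ℝ ↦ cexp ((b + a) * t)) (Iic 0) := by
  intro t ht
  simp only [abs_of_nonpos (mem_Iic.mp ht), ofReal_neg]
  ring_nf

lemma eqOn_Ioi_cexp_mul_sub_mul_abs (a b : ℂ) :
    EqOn (fun t : ℝ ↦ cexp (b * t - a * |t|)) (fun t : ℝ ↦ cexp ((b - a) * t)) (Ioi 0) := by
  intro t ht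
  simp only [abs_of_pos (mem_Ioi.mp ht)]
  ring_nf

lemma integrableOn_Iic_cexp_mul_sub_mul_abs (h : 0 < (b + a).re) :
    IntegrableOn (fun t : ℝ ↦ cexp (b * t - a * |t|)) (Iic 0) :=
  (integrableOn_congr_fun (eqOn_Iic_cexp_mul_sub_mul_abs a b) measurableSet_Iic).mpr
    (integrableOn_exp_mul_complex_Iic h 0)

lemma integrableOn_Ioi_cexp_mul_sub_mul_abs (h : (b - a).re < 0) :
    IntegrableOn (fun t : ℝ ↦ cexp (b * t - a * |t|)) (Ioi 0) :=
  (integrableOn_congr_fun (eqOn_Ioi_cexp_mul_sub_mul_abs a b) measurableSet_Ioi).mpr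
    (integrableOn_exp_mul_complex_Ioi h 0)

lemma integrable_cexp_mul_sub_mul_abs (h : |b.re| < a.re) :
    Integrable (fun t : ℝ ↦ cexp (b * t - a * |t|)) := by
  obtain ⟨hneg, hpos⟩ := abs_lt.mp h
  rw [← integrableOn_univ, ← Iic_union_Ioi (a := (0 : ℝ))]
  exact (integrableOn_Iic_cexp_mul_sub_mul_abs (by rw [add_re]; linarith)).union
    (integrableOn_Ioi_cexp_mul_sub_mul_abs (by rw [sub_re]; linarith))

lemma integral_cexp_mul_sub_mul_abs (h : |b.re| < a.re) :
    ∫ t : ℝ, cexp (b * t - a * |t|) = 2 * a / (a ^ 2 - b ^ 2) := by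
  obtain ⟨hneg, hpos⟩ := abs_lt.mp h
  have hadd : 0 < (b + a).re := by rw [add_re]; linarith
  have hsub : (b - a).re < 0 := by rw [sub_re]; linarith
  have hadd_ne : b + a ≠ 0 := fun h0 ↦ by simp [h0] at hadd
  have hsub_ne : b - a ≠ 0 := fun h0 ↦ by simp [h0] at hsub
  calc ∫ t : ℝ, cexp (b * t - a * |t|)
    _ = (∫ t : ℝ in Iic 0, cexp ((b + a) * t)) + ∫ t : ℝ in Ioi 0, cexp ((b - a) * t) := by
      rw [← intervalIntegral.integral_Iic_add_Ioi (integrableOn_Iic_cexp_mul_sub_mul_abs hadd)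
          (integrableOn_Ioi_cexp_mul_sub_mul_abs hsub),
        setIntegral_congr_fun measurableSet_Iic (eqOn_Iic_cexp_mul_sub_mul_abs a b),
        setIntegral_congr_fun measurableSet_Ioi (eqOn_Ioi_cexp_mul_sub_mul_abs a b)]
    _ = 1 / (b + a) + -1 / (b - a) := by
      simp [integral_exp_mul_complex_Iic hadd, integral_exp_mul_complex_Ioi hsub]
    _ = 2 * a / (a ^ 2 - b ^ 2) := by
      rw [show a ^ 2 - b ^ 2 = -((b + a) * (b - a)) by ring]
      field_simp
      ring

end ExpAbs

section Lorentzian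

variable {a : ℝ}

lemma integrable_inv_sq_add_sq (ha : a ≠ 0) : Integrable (fun t : ℝ ↦ (a ^ 2 + t ^ 2)⁻¹) := by
  refine ((integrable_inv_one_add_sq.comp_div ha).const_mul (a ^ 2)⁻¹).congr
    (.of_forall fun t ↦ ?_)
  field_simp

lemma fourier_exp_neg_two_pi_mul_abs (ha : 0 < a) :
    𝓕 (fun t : ℝ ↦ cexp (-(2 * π * a * |t|))) =
      fun w : ℝ ↦ (a / π : ℂ) * ((a ^ 2 + w ^ 2)⁻¹ : ℝ) := by
  ext w
  have hre : |(-(2 * π * w * I)).re| < (2 * π * a : ℂ).re := by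
    simpa using by positivity
  have hne : (a ^ 2 + w ^ 2 : ℂ) ≠ 0 := by
    exact_mod_cast (by positivity : a ^ 2 + w ^ 2 ≠ 0)
  calc 𝓕 (fun t : ℝ ↦ cexp (-(2 * π * a * |t|))) w
    _ = ∫ t : ℝ, cexp (-(2 * π * w * I) * t - 2 * π * a * |t|) := by
      rw [Real.fourier_real_eq_integral_exp_smul]
      congr 1 with t
      rw [smul_eq_mul, ← Complex.exp_add]
      push_cast
      ring_nf
    _ = 2 * (2 * π * a) / ((2 * π * a) ^ 2 - (-(2 * π * w * I)) ^ 2) :=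
      integral_cexp_mul_sub_mul_abs hre
    _ = 2 * (2 * π * a) / ((2 * π) ^ 2 * (a ^ 2 + w ^ 2)) := by
      congr 1
      linear_combination -(2 * π * w : ℂ) ^ 2 * I_sq
    _ = (a / π : ℂ) * ((a ^ 2 + w ^ 2)⁻¹ : ℝ) := by
      push_cast
      field_simp

lemma integral_cexp_mul_inv_sq_add_sq (ha : 0 < a) (s : ℝ) :
    ∫ t : ℝ, cexp (-(I * s * t)) * ((a ^ 2 + t ^ 2)⁻¹ : ℝ) =
      (π / a : ℂ) * Real.exp (-(a * |s|)) := by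
  have ha_ne : (a : ℂ) ≠ 0 := ofReal_ne_zero.mpr ha.ne'
  have hf : Integrable (fun t : ℝ ↦ cexp (-(2 * π * a * |t|))) := by
    simpa using integrable_cexp_mul_sub_mul_abs (a := 2 * π * a) (b := 0)
      (by simpa using by positivity)
  have hfourier : Integrable (𝓕 (fun t : ℝ ↦ cexp (-(2 * π * a * |t|)))) := by
    rw [fourier_exp_neg_two_pi_mul_abs ha]
    exact (integrable_inv_sq_add_sq ha.ne').ofReal.const_mul _
  have hinversion := congrFun
    (Continuous.fourierInv_fourier_eq (by fun_prop) hf hfourier) (-(s / (2 * π)))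
  calc ∫ t : ℝ, cexp (-(I * s * t)) * ((a ^ 2 + t ^ 2)⁻¹ : ℝ)
    _ = π / a * 𝓕⁻ (𝓕 (fun t : ℝ ↦ cexp (-(2 * π * a * |t|))))
          (-(s / (2 * π))) := by
      rw [fourier_exp_neg_two_pi_mul_abs ha, Real.fourierInv_eq', ← integral_const_mul]
      congr 1 with t
      have hexp : ((2 * π * inner ℝ t (-(s / (2 * π))) : ℝ) : ℂ) * I =
          -(I * s * t) := by
        simp only [RCLike.inner_apply, Real.ringHom_apply, neg_mul, mul_neg, ofReal_neg,
          ofReal_mul, ofReal_ofNat, ofReal_div, neg_inj]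
        field_simp
      rw [hexp, smul_eq_mul]
      field_simp
    _ = (π / a : ℂ) * Real.exp (-(a * |s|)) := by
      rw [hinversion, abs_neg, abs_div, abs_of_pos Real.two_pi_pos]
      push_cast
      field_simp

end Lorentzian

section Jump

variable {𝕜 E : Type*} [NontriviallyNormedField 𝕜] [NormedAddCommGroup E] [NormedSpace 𝕜 E]
  {u u' : ℝ → 𝕜} {f v v' : ℝ → E} {m M : E} {a b c : ℝ}

lemma intervalIntegrable_smul_of_eqOn_sub_const (hv : ContinuousOn v [[a, b]])
    (hu' : IntervalIntegrable u' volume a b) (hf : EqOn f (fun t ↦ v t - m) (uIoo a b)) :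
    IntervalIntegrable (fun t ↦ u' t • f t) volume a b :=
  (hu'.smul_continuousOn (hv.sub (continuousOn_const (c := m)))).congr_uIoo fun t ht ↦ by
    simp only [hf ht, Pi.sub_apply]

variable [NormedAlgebra ℝ 𝕜] [NormedSpace ℝ E] [IsScalarTower ℝ 𝕜 E] [CompleteSpace E]

lemma integral_deriv_smul_of_eqOn_sub_const (hu : ∀ t ∈ [[a, b]], HasDerivAt u (u' t) t)
    (hv : ∀ t ∈ [[a, b]], HasDerivAt v (v' t) t) (hu' : IntervalIntegrable u' volume a b)
    (hv' : IntervalIntegrable v' volume a b) (hf : EqOn f (fun t ↦ v t - m) (uIoo a b)) :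
    ∫ t in a..b, u' t • f t =
      u b • (v b - m) - u a • (v a - m) - ∫ t in a..b, u t • v' t := by
  calc ∫ t in a..b, u' t • f t
    _ = ∫ t in a..b, u' t • (v t - m) :=
      intervalIntegral.integral_congr_uIoo fun t ht ↦ by simp only [hf ht]
    _ = u b • (v b - m) - u a • (v a - m) - ∫ t in a..b, u t • v' t := by
      rw [intervalIntegral.integral_smul_deriv_eq_deriv_smul hu
        (fun t ht ↦ (hv t ht).sub_const m) hu' hv', sub_sub_cancel]

lemma integral_deriv_smul_of_jump (hac : a ≤ c) (hcb : c ≤ b)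
    (hu : ∀ t ∈ [[a, b]], HasDerivAt u (u' t) t) (hv : ∀ t ∈ [[a, b]], HasDerivAt v (v' t) t)
    (hu' : IntervalIntegrable u' volume a b) (hv' : IntervalIntegrable v' volume a b)
    (hm : EqOn f (fun t ↦ v t - m) (Ioo a c)) (hM : EqOn f (fun t ↦ v t - M) (Ioo c b)) :
    ∫ t in a..b, u' t • f t =
      u b • (v b - M) - u a • (v a - m) + u c • (M - m) - ∫ t in a..b, u t • v' t := by
  have hc : c ∈ [[a, b]] := mem_uIcc_of_le hac hcb
  have hleft : [[a, c]] ⊆ [[a, b]] := uIcc_subset_uIcc_left hc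
  have hright : [[c, b]] ⊆ [[a, b]] := uIcc_subset_uIcc_right hc
  rw [← uIoo_of_le hac] at hm
  rw [← uIoo_of_le hcb] at hM
  have hv_cont : ContinuousOn v [[a, b]] := HasDerivAt.continuousOn hv
  have huv' : IntervalIntegrable (fun t ↦ u t • v' t) volume a b :=
    hv'.continuousOn_smul (HasDerivAt.continuousOn hu)
  rw [← intervalIntegral.integral_add_adjacent_intervals
      (intervalIntegrable_smul_of_eqOn_sub_const (hv_cont.mono hleft) (hu'.mono_set hleft) hm)
      (intervalIntegrable_smul_of_eqOn_sub_const (hv_cont.mono hright) (hu'.mono_set hright) hM),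
    ← intervalIntegral.integral_add_adjacent_intervals (huv'.mono_set hleft)
      (huv'.mono_set hright),
    integral_deriv_smul_of_eqOn_sub_const (fun t ht ↦ hu t (hleft ht))
      (fun t ht ↦ hv t (hleft ht)) (hu'.mono_set hleft) (hv'.mono_set hleft) hm,
    integral_deriv_smul_of_eqOn_sub_const (fun t ht ↦ hu t (hright ht))
      (fun t ht ↦ hv t (hright ht)) (hu'.mono_set hright) (hv'.mono_set hright) hM]
  module

theorem tendsto_integral_deriv_smul_of_jump {C : ℝ} (hu : ∀ t, HasDerivAt u (u' t) t)
    (hv : ∀ t, HasDerivAt v (v' t) t) (hC : ∀ t, ‖u t‖ ≤ C)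
    (hu' : ∀ a b, IntervalIntegrable u' volume a b) (hv' : Integrable v')
    (hv_bot : Tendsto v atBot (𝓝 m)) (hv_top : Tendsto v atTop (𝓝 M))
    (hm : EqOn f (fun t ↦ v t - m) (Iio c)) (hM : EqOn f (fun t ↦ v t - M) (Ioi c)) :
    Tendsto (fun P : ℝ × ℝ ↦ ∫ t in P.1..P.2, u' t • f t) (atBot ×ˢ atTop)
      (𝓝 (u c • (M - m) - ∫ t, u t • v' t)) := by
  have hu_cont : Continuous u := continuous_iff_continuousAt.mpr fun t ↦ (hu t).continuousAt
  have hboundary {l : Filter ℝ} {k : E} (hk : Tendsto v l (𝓝 k)) :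
      Tendsto (fun t ↦ u t • (v t - k)) l (𝓝 0) :=
    (isBoundedUnder_of ⟨C, hC⟩).smul_tendsto_zero (tendsto_sub_nhds_zero_iff.mpr hk)
  have hintegral := intervalIntegral_tendsto_integral
    (hv'.bdd_smul C hu_cont.aestronglyMeasurable (.of_forall hC))
    (tendsto_fst (f := atBot) (g := atTop)) tendsto_snd
  have hlim := ((((hboundary hv_top).comp tendsto_snd).sub
    ((hboundary hv_bot).comp tendsto_fst)).add_const (u c • (M - m))).sub hintegral
  rw [sub_zero, zero_add] at hlim
  refine hlim.congr' ?_
  filter_upwards [prod_mem_prod (Iic_mem_atBot c) (Ici_mem_atTop c)] with P hP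
  exact (integral_deriv_smul_of_jump hP.1 hP.2 (fun t _ ↦ hu t) (fun t _ ↦ hv t) (hu' _ _)
    hv'.intervalIntegrable (hm.mono Ioo_subset_Iio_self) (hM.mono Ioo_subset_Ioi_self)).symm

end Jump

lemma hasDerivAt_I_div_mul_cexp {s : ℝ} (hs : s ≠ 0) (t : ℝ) :
    HasDerivAt (fun t : ℝ ↦ I / s * cexp (-(I * s * t))) (cexp (-(I * s * t))) t := by
  have hs' : (s : ℂ) ≠ 0 := ofReal_ne_zero.mpr hs
  refine ((((hasDerivAt_id t).ofReal_comp.const_mul (I * (s : ℂ))).neg.cexp).const_mul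
    (I / s)).congr_deriv ?_
  simp only [id, ofReal_one]
  field_simp
  linear_combination -cexp (-(I * s * t)) * I_sq

lemma norm_I_div_mul_cexp (s t : ℝ) : ‖I / s * cexp (-(I * s * t))‖ = |s|⁻¹ := by
  simp [Complex.norm_exp]

/-- The improper Fourier transform of `g(x) = arctan(x) - (π/2) sgn(x)` exists for `s ≠ 0`
and equals `iπ(1 - e^{-|s|})/s`. -/
theorem fourier_transform_arctan_minus_sgn (s : ℝ) (hs : s ≠ 0) :
    Filter.Tendsto
      (fun P : ℝ × ℝ =>
        ∫ t in P.1..P.2, Complex.exp (-(Complex.I * s * t)) *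
          ((Real.arctan t - Real.pi / 2 * Real.sign t : ℝ) : ℂ))
      (Filter.atBot ×ˢ Filter.atTop)
      (nhds (Complex.I * (Real.pi : ℂ) * (1 - ((Real.exp (-|s|) : ℝ) : ℂ)) / (s : ℂ))) := by
  have hbot := (tendsto_nhds_of_tendsto_nhdsWithin Real.tendsto_arctan_atBot).ofReal
  have htop := (tendsto_nhds_of_tendsto_nhdsWithin Real.tendsto_arctan_atTop).ofReal
  have hlim := tendsto_integral_deriv_smul_of_jump (c := 0)
    (f := fun t ↦ ((Real.arctan t - Real.pi / 2 * Real.sign t : ℝ) : ℂ))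
    (v' := fun t ↦ ((1 + t ^ 2)⁻¹ : ℝ))
    (hasDerivAt_I_div_mul_cexp hs) (fun t ↦ (Real.hasDerivAt_arctan' t).ofReal_comp)
    (fun t ↦ (norm_I_div_mul_cexp s t).le)
    (fun a b ↦ Continuous.intervalIntegrable (by fun_prop) a b)
    integrable_inv_one_add_sq.ofReal hbot htop
    (fun t ht ↦ by simp [Real.sign_of_neg ht]) (fun t ht ↦ by simp [Real.sign_of_pos ht])
  have hlorentzian := integral_cexp_mul_inv_sq_add_sq one_pos s
  simp only [one_pow, ofReal_one, div_one, one_mul] at hlorentzian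
  simp only [smul_eq_mul, mul_assoc (I / (s : ℂ)), integral_const_mul, hlorentzian] at hlim
  convert hlim using 2
  simp only [ofReal_zero, mul_zero, neg_zero, exp_zero, ofReal_neg, ofReal_div, ofReal_ofNat,
    sub_neg_eq_add, add_halves]
  ring
end
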